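/- Fix integers d ≥ 2 and n ≥ 2, set r = d mod 2, c(k) = exp(−iπ k(k+r)/d) and c_{k,l} = c(k)c(l). For k, l ∈ {0, …, d−1} let Π_{k,l} = (X_d^{k} Z_d^{l} ⊗ I_d) Φ_d Φ_d† ((Z_d†)^{l} (X_d†)^{k} ⊗ I_d) on ℂ^{Fin d × Fin d}, and let U_{k,l} be the (n−1)-fold tensor power of X_d^{k} (Z_d†)^{l}, realized as the matrix on index type (Fin (n−1) → Fin d) with entries (f,g) ↦ ∏_j (X_d^{k}(Z_d†)^{l})(f j, g j). Then the operator A = ∑_{k=0}^{d−1} ∑_{l=0}^{d−1} c_{k,l}^{−1} · (Π_{k,l} ⊗ U_{k,l}) is unitary; consequently the decryption operator of the protocol, which is A composed with a fixed unitary on the first two factors, is unitary. -/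

import Mathlib

open Matrix Kronecker Complex

noncomputable section

/-- The generalized shift (Pauli X) operator on `ℂ^d`: `X_d(j,k) = 1` iff `j = k+1 (mod d)`. -/
def Xd (d : ℕ) : Matrix (Fin d) (Fin d) ℂ :=
  Matrix.of fun j k => if (j : ℕ) = ((k : ℕ) + 1) % d then 1 else 0

/-- The generalized phase (Pauli Z) operator on `ℂ^d`: `Z_d(j,k) = ω^k` iff `j = k`,
where `ω = exp(2πi/d)`. -/
def Zd (d : ℕ) : Matrix (Fin d) (Fin d) ℂ :=
  Matrix.of fun j k =>
    if j = k then Complex.exp (2 * Real.pi * Complex.I * (k : ℕ) / d) else 0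

/-- The generalized Bell state `Φ_d ∈ ℂ^{Fin d × Fin d}`, `Φ_d(p,q) = δ_{p,q}/√d`. -/
def Bell (d : ℕ) : Fin d × Fin d → ℂ :=
  fun p => if p.1 = p.2 then 1 / (Real.sqrt d : ℂ) else 0

/-- The rank-one operator `Π_{i,j} = (X^i Z^j ⊗ I) Φ_d Φ_d† ((Z†)^j (X†)^i ⊗ I)`. -/
def Pi' (d i j : ℕ) : Matrix (Fin d × Fin d) (Fin d × Fin d) ℂ :=
  ((Xd d ^ i * Zd d ^ j) ⊗ₖ (1 : Matrix (Fin d) (Fin d) ℂ)) *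
    vecMulVec (Bell d) (star (Bell d)) *
    (((Zd d)ᴴ ^ j * (Xd d)ᴴ ^ i) ⊗ₖ (1 : Matrix (Fin d) (Fin d) ℂ))

/-- The Chu sequence `c(k) = exp(−iπ k(k + (d mod 2))/d)`. -/
def chu (d k : ℕ) : ℂ :=
  Complex.exp (-(Real.pi * Complex.I * (k : ℂ) * ((k : ℂ) + ((d % 2 : ℕ) : ℂ)) / d))

/-- The `m`-fold tensor (Kronecker) power of a `d×d` matrix, as a matrix
indexed by `Fin m → Fin d`: entries `(f,g) ↦ ∏ i, M (f i) (g i)`. -/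
def tpow (d m : ℕ) (M : Matrix (Fin d) (Fin d) ℂ) :
    Matrix (Fin m → Fin d) (Fin m → Fin d) ℂ :=
  Matrix.of fun f g => ∏ i, M (f i) (g i)

lemma tpow_mul' (d m : ℕ) (M N : Matrix (Fin d) (Fin d) ℂ) :
    tpow d m (M * N) = tpow d m M * tpow d m N := by
  ext f g
  simp only [tpow, Matrix.of_apply, Matrix.mul_apply]
  rw [Finset.prod_univ_sum]
  simp [Finset.prod_mul_distrib]

lemma tpow_one' (d m : ℕ) : tpow d m 1 = 1 := by
  ext f g
  simp only [tpow, Matrix.of_apply, Matrix.one_apply]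
  rw [Finset.prod_ite_zero]
  simp [funext_iff]

lemma tpow_star' (d m : ℕ) (M : Matrix (Fin d) (Fin d) ℂ) :
    tpow d m (star M) = star (tpow d m M) := by
  ext f g
  simp [tpow, Matrix.star_apply]

lemma tpow_unitary (d m : ℕ) (M : Matrix (Fin d) (Fin d) ℂ)
    (h : M ∈ Matrix.unitaryGroup (Fin d) ℂ) :
    tpow d m M ∈ Matrix.unitaryGroup (Fin m → Fin d) ℂ := by
  rw [Matrix.mem_unitaryGroup_iff] at *
  rw [← tpow_star', ← tpow_mul', h, tpow_one']

lemma core_general {ι κ : Type*} [Fintype ι] [DecidableEq ι] [Fintype κ] [DecidableEq κ]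
    (V : ι → ι → ℂ) (hV : ∀ i j, star (V i) ⬝ᵥ V j = if i = j then 1 else 0)
    (U : ι → Matrix κ κ ℂ) (hU : ∀ i, U i ∈ Matrix.unitaryGroup κ ℂ)
    (c : ι → ℂ) (hc : ∀ i, c i * star (c i) = 1) :
    (∑ i, c i • (vecMulVec (V i) (star (V i)) ⊗ₖ U i)) ∈ Matrix.unitaryGroup (ι × κ) ℂ := by
  have hsum : ∑ i, vecMulVec (V i) (star (V i)) = 1 := by
    let W : Matrix ι ι ℂ := Matrix.of fun p i => V i p
    have h1 : Wᴴ * W = 1 := by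
      ext i j
      have := hV i j
      simpa [W, Matrix.mul_apply, dotProduct, Matrix.one_apply] using this
    have h2 : W * Wᴴ = 1 := mul_eq_one_comm.mp h1
    rw [← h2]
    ext p q
    simp [W, Matrix.mul_apply, Matrix.sum_apply, vecMulVec_apply]
  rw [Matrix.mem_unitaryGroup_iff, star_sum, Finset.sum_mul_sum]
  have key : ∀ i j, (c i • (vecMulVec (V i) (star (V i)) ⊗ₖ U i)) *
      star (c j • (vecMulVec (V j) (star (V j)) ⊗ₖ U j)) =
      if i = j then vecMulVec (V i) (star (V i)) ⊗ₖ (1 : Matrix κ κ ℂ) else 0 := by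
    intro i j
    rw [star_smul, smul_mul_smul_comm, Matrix.star_eq_conjTranspose,
      Matrix.conjTranspose_kronecker, ← Matrix.mul_kronecker_mul, Matrix.conjTranspose_vecMulVec,
      star_star, Matrix.vecMulVec_mul_vecMulVec, hV]
    split_ifs with h
    · subst h
      have := Matrix.mem_unitaryGroup_iff.mp (hU i)
      rw [Matrix.star_eq_conjTranspose] at this
      rw [this, hc]
      simp
    · simp
  simp_rw [key]
  simp only [Finset.sum_ite_eq, Finset.mem_univ, if_true]
  have : ∑ i, vecMulVec (V i) (star (V i)) ⊗ₖ (1 : Matrix κ κ ℂ)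
      = (∑ i, vecMulVec (V i) (star (V i))) ⊗ₖ (1 : Matrix κ κ ℂ) := by
    ext p q
    simp [Matrix.sum_apply, Finset.sum_mul]
  rw [this, hsum, Matrix.one_kronecker_one]

/-- The primitive root of unity. -/
def om (d : ℕ) : ℂ := Complex.exp (2 * Real.pi * Complex.I / d)

lemma om_star (d : ℕ) : star (om d) = (om d)⁻¹ := by
  rw [om, ← Complex.exp_neg]
  show (starRingEnd ℂ) _ = _
  rw [← Complex.exp_conj]
  congr 1
  simp [neg_div, Complex.conj_ofNat]

lemma om_ne (d : ℕ) : om d ≠ 0 := Complex.exp_ne_zero _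

lemma Zd_eq (d : ℕ) : Zd d = Matrix.diagonal fun k : Fin d => om d ^ (k : ℕ) := by
  ext j k
  simp only [Zd, Matrix.of_apply, Matrix.diagonal_apply]
  split_ifs with h
  · subst h
    rw [om, ← Complex.exp_nat_mul]
    congr 1
    ring
  · rfl

lemma Zd_unitary (d : ℕ) : Zd d ∈ Matrix.unitaryGroup (Fin d) ℂ := by
  rw [Matrix.mem_unitaryGroup_iff, Zd_eq, Matrix.star_eq_conjTranspose,
    Matrix.diagonal_conjTranspose, Matrix.diagonal_mul_diagonal, ← Matrix.diagonal_one]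
  congr 1
  ext k
  simp only [Pi.star_apply, star_pow, om_star, ← mul_pow]
  simp [om_ne]

lemma mod_inj {d a b k : ℕ} (ha : a < d) (hb : b < d) (h : (a + k) % d = (b + k) % d) : a = b := by
  have h1 : a ≡ b [MOD d] := Nat.ModEq.add_right_cancel' k h
  exact Nat.ModEq.eq_of_lt_of_lt h1 ha hb

lemma Xd_pow (d k : ℕ) (p q : Fin d) :
    (Xd d ^ k) p q = if (p : ℕ) = ((q : ℕ) + k) % d then 1 else 0 := by
  induction k generalizing p q with
  | zero => simp [Matrix.one_apply, Fin.ext_iff, Nat.mod_eq_of_lt q.2]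
  | succ k ih =>
    rw [pow_succ, Matrix.mul_apply]
    have hd : 0 < d := q.pos
    rw [Finset.sum_eq_single (⟨((q : ℕ) + 1) % d, Nat.mod_lt _ hd⟩ : Fin d)]
    · rw [ih]
      simp [Xd, Nat.add_assoc, Nat.add_comm 1 k]
    · intro b _ hb
      have : (b : ℕ) ≠ ((q : ℕ) + 1) % d := fun h => hb (Fin.ext h)
      simp [Xd, this]
    · simp

lemma Xd_unitary (d : ℕ) : Xd d ∈ Matrix.unitaryGroup (Fin d) ℂ := by
  rw [Matrix.mem_unitaryGroup_iff']
  ext a b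
  have hd : 0 < d := a.pos
  rw [Matrix.mul_apply, Finset.sum_eq_single (⟨((b : ℕ) + 1) % d, Nat.mod_lt _ hd⟩ : Fin d)]
  · simp only [Matrix.star_apply, Xd, Matrix.of_apply, Matrix.one_apply]
    by_cases h : a = b
    · subst h; simp
    · have : ¬ ((b : ℕ) + 1) % d = ((a : ℕ) + 1) % d :=
        fun e => h (Fin.ext (mod_inj a.2 b.2 e.symm))
      simp [h, this]
  · intro p _ hp
    have : (p : ℕ) ≠ ((b : ℕ) + 1) % d := fun h => hp (Fin.ext h)
    simp [Xd, this]
  · simp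

/-- The Bell basis. -/
def vv (d k l : ℕ) : Fin d × Fin d → ℂ :=
  ((Xd d ^ k * Zd d ^ l) ⊗ₖ (1 : Matrix (Fin d) (Fin d) ℂ)) *ᵥ Bell d

lemma Pi'_eq (d k l : ℕ) : Pi' d k l = vecMulVec (vv d k l) (star (vv d k l)) := by
  rw [Pi', vv, Matrix.mul_vecMulVec, Matrix.vecMulVec_mul, Matrix.star_mulVec,
    Matrix.conjTranspose_kronecker, Matrix.conjTranspose_mul, Matrix.conjTranspose_pow,
    Matrix.conjTranspose_pow, Matrix.conjTranspose_one]

lemma vv_apply (d k l : ℕ) (p q : Fin d) :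
    vv d k l (p, q) = (if (p : ℕ) = ((q : ℕ) + k) % d then 1 else 0) * (om d ^ l) ^ (q : ℕ)
      * (1 / (Real.sqrt d : ℂ)) := by
  rw [vv, Matrix.mulVec, dotProduct, Fintype.sum_prod_type, Finset.sum_eq_single q]
  · rw [Finset.sum_eq_single q]
    · rw [Matrix.kronecker_apply, Zd_eq, Matrix.diagonal_pow, Matrix.mul_diagonal, Xd_pow]
      simp only [Bell, Matrix.one_apply_eq, Pi.pow_apply, if_true, mul_one]
      rw [← pow_mul, ← pow_mul, mul_comm l]
    · intro b _ hb
      simp [Matrix.one_apply, hb.symm]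
    · simp
  · intro a _ ha
    apply Finset.sum_eq_zero
    intro b _
    by_cases h : q = b
    · subst h; simp [Bell, ha]
    · simp [Matrix.one_apply, h]
  · simp

lemma om_sum (d : ℕ) (hd : 2 ≤ d) (l l' : Fin d) :
    ∑ q : Fin d, star ((om d ^ (l : ℕ)) ^ (q : ℕ)) * (om d ^ (l' : ℕ)) ^ (q : ℕ)
      = if l = l' then (d : ℂ) else 0 := by
  have hp : IsPrimitiveRoot (om d) d := Complex.isPrimitiveRoot_exp d (by omega)
  set z : ℂ := (om d ^ (l : ℕ))⁻¹ * om d ^ (l' : ℕ) with hz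
  have hne : om d ^ (l : ℕ) ≠ 0 := pow_ne_zero _ (om_ne d)
  have h1 : ∀ q : Fin d, star ((om d ^ (l : ℕ)) ^ (q : ℕ)) * (om d ^ (l' : ℕ)) ^ (q : ℕ)
      = z ^ (q : ℕ) := by
    intro q
    rw [star_pow, star_pow, om_star, hz, mul_pow, inv_pow]
  simp_rw [h1]
  rw [Fin.sum_univ_eq_sum_range (fun q => z ^ q) d]
  split_ifs with h
  · subst h
    have : z = 1 := by rw [hz, inv_mul_cancel₀ hne]
    simp [this]
  · have hz1 : z ≠ 1 := by
      intro e
      apply h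
      have : om d ^ (l : ℕ) = om d ^ (l' : ℕ) := by
        rw [hz] at e
        exact ((inv_mul_eq_one₀ hne).mp e)
      exact Fin.ext (hp.pow_inj l.2 l'.2 this)
    have hzd : z ^ d = 1 := by
      rw [hz, mul_pow, inv_pow, ← pow_mul, ← pow_mul, mul_comm _ d, mul_comm _ d, pow_mul, pow_mul,
        hp.pow_eq_one]
      simp
    have := geom_sum_mul z d
    rw [hzd, sub_self] at this
    exact (mul_eq_zero.mp this).resolve_right (sub_ne_zero.mpr hz1)

lemma vv_orth (d : ℕ) (hd : 2 ≤ d) (i j : Fin d × Fin d) :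
    star (vv d i.1 i.2) ⬝ᵥ vv d j.1 j.2 = if i = j then 1 else 0 := by
  obtain ⟨k, l⟩ := i
  obtain ⟨k', l'⟩ := j
  have hs : (1 / (Real.sqrt d : ℂ)) * (1 / (Real.sqrt d : ℂ)) = 1 / d := by
    rw [div_mul_div_comm, ← Complex.ofReal_mul, Real.mul_self_sqrt (by positivity)]
    simp
  have hss : star (1 / (Real.sqrt d : ℂ)) = 1 / (Real.sqrt d : ℂ) := by
    simp
  have hd0 : (d : ℂ) ≠ 0 := by
    have : d ≠ 0 := by omega
    exact_mod_cast this
  have inner : ∀ q : Fin d, ∑ p : Fin d, star (vv d k l (p, q)) * vv d k' l' (p, q)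
      = (if k = k' then 1 / (d : ℂ) else 0) *
        (star ((om d ^ (l : ℕ)) ^ (q : ℕ)) * (om d ^ (l' : ℕ)) ^ (q : ℕ)) := by
    intro q
    rw [Finset.sum_eq_single (⟨((q : ℕ) + k) % d, Nat.mod_lt _ (by omega)⟩ : Fin d)]
    · rw [vv_apply, vv_apply]
      simp only [if_true, one_mul, star_mul', hss]
      by_cases h : k = k'
      · subst h
        simp only [if_true, ← hs]
        ring
      · have : ¬ ((q : ℕ) + k) % d = ((q : ℕ) + k') % d := by
          intro e
          rw [Nat.add_comm _ (k : ℕ), Nat.add_comm _ (k' : ℕ)] at e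
          exact h (Fin.ext (mod_inj k.2 k'.2 e))
        simp [h, this]
    · intro p _ hp
      have : (p : ℕ) ≠ ((q : ℕ) + k) % d := fun h => hp (Fin.ext h)
      rw [vv_apply]
      simp [this]
    · simp
  rw [dotProduct, Fintype.sum_prod_type_right]
  simp only [Pi.star_apply]
  simp_rw [inner]
  rw [← Finset.mul_sum, om_sum d hd]
  by_cases h : k = k' <;> by_cases h' : l = l' <;> simp [h, h', hd0]

lemma chu_star (d k : ℕ) : star (chu d k) = (chu d k)⁻¹ := by
  rw [chu, ← Complex.exp_neg]
  show (starRingEnd ℂ) _ = _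
  rw [← Complex.exp_conj]
  congr 1
  simp [neg_div]

lemma chu_ne (d k : ℕ) : chu d k ≠ 0 := Complex.exp_ne_zero _

/-- The core of the decryption operator,
`A = ∑_{k,l<d} (c(k)c(l))⁻¹ (Π_{k,l} ⊗ U_{k,l})` with
`U_{k,l}` the `(n−1)`-fold tensor power of `X^k (Z†)^l`, is unitary. -/
theorem Udec_core_unitary (d n : ℕ) (hd : 2 ≤ d) (hn : 2 ≤ n) :
    (∑ k ∈ Finset.range d, ∑ l ∈ Finset.range d,
        (chu d k * chu d l)⁻¹ • (Pi' d k l ⊗ₖ tpow d (n - 1) (Xd d ^ k * (Zd d)ᴴ ^ l)))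
      ∈ Matrix.unitaryGroup ((Fin d × Fin d) × (Fin (n - 1) → Fin d)) ℂ := by
  have hmain := core_general (fun i : Fin d × Fin d => vv d i.1 i.2) (vv_orth d hd)
    (fun i => tpow d (n - 1) (Xd d ^ (i.1 : ℕ) * (Zd d)ᴴ ^ (i.2 : ℕ)))
    (fun i => tpow_unitary _ _ _ (mul_mem (pow_mem (Xd_unitary d) _)
      (pow_mem (Unitary.star_mem (Zd_unitary d)) _)))
    (fun i => (chu d i.1 * chu d i.2)⁻¹)
    (fun i => by
      have h1 := chu_ne d i.1
      have h2 := chu_ne d i.2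
      simp only [star_inv₀, star_mul', chu_star]
      field_simp)
  rw [Fintype.sum_prod_type] at hmain
  simp only [← Pi'_eq] at hmain
  rw [Finset.sum_range]
  simp_rw [Finset.sum_range]
  exact hmain
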